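/- Let Ω ⊂ ℝ² be a bounded C² domain, u a C³ solution of −Δu = ρ²(e^u − e^{-u}) in Ω, and v a C² solution of −Δv = μρ²(e^u + e^{-u})v in Ω. Then for any smooth subdomain Ω′ with closure contained in Ω and any j ∈ {1,2}: (1 − μ) ρ² ∫_{Ω′} (e^{u(x)} + e^{-u(x)}) (∂u/∂x_j)(x) v(x) dx = ∫_{∂Ω′} [ (∂v/∂ν)(x)(∂u/∂x_j)(x) − v(x)(∂²u/∂ν∂x_j)(x) ] dσ(x), where ν is the outward unit normal to ∂Ω′. -/

import Mathlib

open MeasureTheory Real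

/-- Laplacian on ℝ² via second partial derivatives. -/
noncomputable def lap (f : ℝ × ℝ → ℝ) (p : ℝ × ℝ) : ℝ :=
  deriv (deriv (fun s => f (s, p.2))) p.1 + deriv (deriv (fun s => f (p.1, s))) p.2

/-- Partial derivative in the j-th coordinate direction on ℝ². -/
noncomputable def pd (j : Fin 2) (f : ℝ × ℝ → ℝ) (p : ℝ × ℝ) : ℝ :=
  if j = 0 then deriv (fun s => f (s, p.2)) p.1 else deriv (fun s => f (p.1, s)) p.2

/-- Outward-normal derivative associated to a normal field ν. -/
noncomputable def nder (ν : ℝ × ℝ → ℝ × ℝ) (f : ℝ × ℝ → ℝ) (x : ℝ × ℝ) : ℝ :=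
  (ν x).1 * pd 0 f x + (ν x).2 * pd 1 f x

open Filter Topology in
/-- The coordinate partial derivatives only depend on the germ of the function. -/
theorem pd_congr {f g : ℝ × ℝ → ℝ} {p : ℝ × ℝ} (j : Fin 2) (h : f =ᶠ[𝓝 p] g) :
    pd j f p = pd j g p := by
  unfold pd
  split_ifs
  · have ht : Tendsto (fun s : ℝ => (s, p.2)) (𝓝 p.1) (𝓝 p) :=
      (Continuous.prodMk_left p.2).tendsto p.1
    exact (h.comp_tendsto ht).deriv_eq
  · have ht : Tendsto (fun s : ℝ => (p.1, s)) (𝓝 p.2) (𝓝 p) :=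
      (Continuous.prodMk_right p.1).tendsto p.2
    exact (h.comp_tendsto ht).deriv_eq

/-- The coordinate vectors of `ℝ × ℝ`. -/
def coordVec (j : Fin 2) : ℝ × ℝ := if j = 0 then (1, 0) else (0, 1)

theorem HasFDerivAt.pd_eq {f : ℝ × ℝ → ℝ} {f' : ℝ × ℝ →L[ℝ] ℝ} {p : ℝ × ℝ}
    (h : HasFDerivAt f f' p) (j : Fin 2) : pd j f p = f' (coordVec j) := by
  unfold pd coordVec
  split_ifs
  · exact (h.comp_hasDerivAt (f := fun s : ℝ => (s, p.2)) p.1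
      ((hasDerivAt_id p.1).prodMk (hasDerivAt_const p.1 p.2))).deriv
  · exact (h.comp_hasDerivAt (f := fun s : ℝ => (p.1, s)) p.2
      ((hasDerivAt_const p.2 p.1).prodMk (hasDerivAt_id p.2))).deriv

theorem DifferentiableAt.pd_eq {f : ℝ × ℝ → ℝ} {p : ℝ × ℝ}
    (h : DifferentiableAt ℝ f p) (j : Fin 2) : pd j f p = fderiv ℝ f p (coordVec j) :=
  h.hasFDerivAt.pd_eq j

theorem pd_add {f g : ℝ × ℝ → ℝ} {p : ℝ × ℝ} (hf : DifferentiableAt ℝ f p)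
    (hg : DifferentiableAt ℝ g p) (j : Fin 2) :
    pd j (fun x => f x + g x) p = pd j f p + pd j g p := by
  rw [hf.pd_eq, hg.pd_eq]
  exact (hf.hasFDerivAt.add hg.hasFDerivAt).pd_eq j

theorem pd_mul_sub_mul {a b c d : ℝ × ℝ → ℝ} {p : ℝ × ℝ} (ha : DifferentiableAt ℝ a p)
    (hb : DifferentiableAt ℝ b p) (hc : DifferentiableAt ℝ c p) (hd : DifferentiableAt ℝ d p)
    (j : Fin 2) :
    pd j (fun x => a x * b x - c x * d x) p =
      a p * pd j b p + b p * pd j a p - (c p * pd j d p + d p * pd j c p) := by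
  rw [ha.pd_eq, hb.pd_eq, hc.pd_eq, hd.pd_eq]
  refine (((ha.hasFDerivAt.mul hb.hasFDerivAt).sub
    (hc.hasFDerivAt.mul hd.hasFDerivAt)).pd_eq j).trans ?_
  simp

theorem pd_sinh_nonlinearity {u : ℝ × ℝ → ℝ} {p : ℝ × ℝ} (hu : DifferentiableAt ℝ u p)
    (ρ : ℝ) (j : Fin 2) :
    pd j (fun x => -(ρ ^ 2 * (Real.exp (u x) - Real.exp (-u x)))) p =
      -(ρ ^ 2 * (Real.exp (u p) + Real.exp (-u p)) * pd j u p) := by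
  rw [hu.pd_eq]
  refine (((hu.hasFDerivAt.exp.sub hu.hasFDerivAt.neg.exp).const_mul (ρ ^ 2)).neg.pd_eq j).trans ?_
  simp
  ring

theorem lap_eq_pd (f : ℝ × ℝ → ℝ) (p : ℝ × ℝ) :
    lap f p = pd 0 (pd 0 f) p + pd 1 (pd 1 f) p := by
  simp [lap, pd]

theorem ContDiffOn.pd {f : ℝ × ℝ → ℝ} {U : Set (ℝ × ℝ)} {m n : ℕ∞} (hU : IsOpen U)
    (hf : ContDiffOn ℝ n f U) (hmn : m + 1 ≤ n) (j : Fin 2) : ContDiffOn ℝ m (pd j f) U := by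
  have hmn' : (m : WithTop ℕ∞) + 1 ≤ n := by exact_mod_cast hmn
  have h1 : (n : WithTop ℕ∞) ≠ 0 := by
    rintro h
    rw [h] at hmn'
    simp at hmn'
  refine ((hf.fderiv_of_isOpen hU hmn').clm_apply contDiffOn_const (g := fun _ => coordVec j)).congr
    fun x hx => ?_
  exact ((hf.contDiffAt (hU.mem_nhds hx)).differentiableAt h1).pd_eq j

theorem pd_comm {f : ℝ × ℝ → ℝ} {U : Set (ℝ × ℝ)} (hU : IsOpen U)
    (hf : ContDiffOn ℝ 2 f U) {p : ℝ × ℝ} (hp : p ∈ U) (i j : Fin 2) :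
    pd i (pd j f) p = pd j (pd i f) p := by
  have hD : DifferentiableAt ℝ (fderiv ℝ f) p :=
    ((hf.fderiv_of_isOpen (m := 1) hU (by norm_num)).contDiffAt
      (hU.mem_nhds hp)).differentiableAt (by norm_num)
  have key : ∀ i j, pd i (pd j f) p = fderiv ℝ (fderiv ℝ f) p (coordVec i) (coordVec j) := by
    intro i j
    have h : pd j f =ᶠ[nhds p] fun x => fderiv ℝ f x (coordVec j) := by
      filter_upwards [hU.mem_nhds hp] with x hx
      exact ((hf.contDiffAt (hU.mem_nhds hx)).differentiableAt (by norm_num)).pd_eq j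
    rw [pd_congr i h, (hD.hasFDerivAt.clm_apply (hasFDerivAt_const (coordVec j) p)).pd_eq]
    simp
  rw [key, key]
  exact ((hf.contDiffAt (hU.mem_nhds hp)).isSymmSndFDerivAt (by simp)).eq _ _

theorem lap_pd {f : ℝ × ℝ → ℝ} {U : Set (ℝ × ℝ)} (hU : IsOpen U)
    (hf : ContDiffOn ℝ 3 f U) {p : ℝ × ℝ} (hp : p ∈ U) (j : Fin 2) :
    lap (pd j f) p = pd j (lap f) p := by
  have hpd : ∀ i, ContDiffOn ℝ 2 (pd i f) U := fun i =>
    ContDiffOn.pd (m := 2) (n := 3) hU hf (by norm_num) i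
  have hcomm : ∀ i, pd i (pd i (pd j f)) p = pd j (pd i (pd i f)) p := by
    intro i
    have h : pd i (pd j f) =ᶠ[nhds p] pd j (pd i f) := by
      filter_upwards [hU.mem_nhds hp] with x hx
      exact pd_comm hU (hf.of_le (by norm_num)) hx i j
    rw [pd_congr i h, pd_comm hU (hpd i) hp]
  have hdiff : ∀ i, DifferentiableAt ℝ (pd i (pd i f)) p := fun i =>
    ((ContDiffOn.pd (m := 1) (n := 2) hU (hpd i) (by norm_num) i).contDiffAt
      (hU.mem_nhds hp)).differentiableAt (by norm_num)
  rw [lap_eq_pd, hcomm, hcomm, ← pd_add (hdiff 0) (hdiff 1)]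
  exact pd_congr j (.of_forall fun x => (lap_eq_pd f x).symm)

/-- Integral identity for the linearized sinh-Poisson equation.  The subdomain Ω′ has
closure contained in Ω; its boundary data (surface measure σ on the frontier and outward
unit normal ν) are abstracted through the validity of the divergence theorem on Ω′. -/
theorem stmt10 (Ω Ω' : Set (ℝ × ℝ)) (hΩ : IsOpen Ω) (hΩb : Bornology.IsBounded Ω)
    (ρ μ : ℝ) (hρ : 0 < ρ)
    (u v : ℝ × ℝ → ℝ) (hu : ContDiffOn ℝ 3 u Ω) (hv : ContDiffOn ℝ 2 v Ω)
    (hueq : ∀ x ∈ Ω, -lap u x = ρ^2 * (Real.exp (u x) - Real.exp (-u x)))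
    (hveq : ∀ x ∈ Ω, -lap v x = μ * ρ^2 * (Real.exp (u x) + Real.exp (-u x)) * v x)
    (hΩ' : IsOpen Ω') (hsub : closure Ω' ⊆ Ω)
    (σ : Measure (ℝ × ℝ)) (ν : ℝ × ℝ → ℝ × ℝ)
    (hν : ∀ x ∈ frontier Ω', (ν x).1^2 + (ν x).2^2 = 1)
    (hdiv : ∀ F : ℝ × ℝ → ℝ × ℝ, ContDiffOn ℝ 1 F Ω →
      (∫ x in Ω', (deriv (fun s => (F (s, x.2)).1) x.1 +
                   deriv (fun s => (F (x.1, s)).2) x.2))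
        = ∫ x in frontier Ω', ((F x).1 * (ν x).1 + (F x).2 * (ν x).2) ∂σ)
    (j : Fin 2) :
    (1 - μ) * ρ^2 *
        (∫ x in Ω', (Real.exp (u x) + Real.exp (-u x)) * pd j u x * v x)
      = ∫ x in frontier Ω',
          (nder ν v x * pd j u x - v x * nder ν (pd j u) x) ∂σ := by
  have hw : ContDiffOn ℝ 2 (pd j u) Ω := ContDiffOn.pd (m := 2) (n := 3) hΩ hu (by norm_num) j
  have hpv : ∀ i, ContDiffOn ℝ 1 (pd i v) Ω := fun i =>
    ContDiffOn.pd (m := 1) (n := 2) hΩ hv (by norm_num) i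
  have hpw : ∀ i, ContDiffOn ℝ 1 (pd i (pd j u)) Ω := fun i =>
    ContDiffOn.pd (m := 1) (n := 2) hΩ hw (by norm_num) i
  have hv1 : ContDiffOn ℝ 1 v Ω := hv.of_le (by norm_num)
  have hw1 : ContDiffOn ℝ 1 (pd j u) Ω := hw.of_le (by norm_num)
  have hG : ∀ i, ContDiffOn ℝ 1 (fun x => pd i v x * pd j u x - v x * pd i (pd j u) x) Ω :=
    fun i => ((hpv i).mul hw1).sub (hv1.mul (hpw i))
  have hflux := hdiv (fun x => (pd 0 v x * pd j u x - v x * pd 0 (pd j u) x,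
    pd 1 v x * pd j u x - v x * pd 1 (pd j u) x)) ((hG 0).prodMk (hG 1))
  have hbdry : ∀ x, nder ν v x * pd j u x - v x * nder ν (pd j u) x =
      (pd 0 v x * pd j u x - v x * pd 0 (pd j u) x) * (ν x).1 +
        (pd 1 v x * pd j u x - v x * pd 1 (pd j u) x) * (ν x).2 := by
    intro x
    unfold nder
    ring
  simp only [hbdry]
  rw [← hflux, ← integral_const_mul]
  refine setIntegral_congr_fun hΩ'.measurableSet fun x hx => ?_
  have hxΩ : x ∈ Ω := hsub (subset_closure hx)
  have hnhds := hΩ.mem_nhds hxΩ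
  have diff : ∀ {f : ℝ × ℝ → ℝ}, ContDiffOn ℝ 1 f Ω → DifferentiableAt ℝ f x := fun hf =>
    (hf.contDiffAt hnhds).differentiableAt (by norm_num)
  have hlapw : lap (pd j u) x = -(ρ ^ 2 * (Real.exp (u x) + Real.exp (-u x)) * pd j u x) := by
    rw [lap_pd hΩ hu hxΩ, ← pd_sinh_nonlinearity (diff (hu.of_le (by norm_num)))]
    refine pd_congr j ?_
    filter_upwards [hnhds] with y hy
    rw [← hueq y hy, neg_neg]
  have hlapv := hveq x hxΩ
  rw [lap_eq_pd] at hlapw hlapv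
  have hdivG : ∀ i, pd i (fun x => pd i v x * pd j u x - v x * pd i (pd j u) x) x =
      pd j u x * pd i (pd i v) x - v x * pd i (pd i (pd j u)) x := by
    intro i
    rw [pd_mul_sub_mul (diff (hpv i)) (diff hw1) (diff hv1) (diff (hpw i))]
    ring
  change _ = pd 0 (fun x => pd 0 v x * pd j u x - v x * pd 0 (pd j u) x) x +
    pd 1 (fun x => pd 1 v x * pd j u x - v x * pd 1 (pd j u) x) x
  rw [hdivG, hdivG]
  linear_combination pd j u x * hlapv + v x * hlapw
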